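/- Let f be a C^∞ positive function on an open interval. Then the Bach components satisfy the divergence-free identity (B₄[f])'(t) = (f'(t)/f(t)) · (B₃[f](t) - B₄[f](t)) for all t in the interval, where B₃[f] and B₄[f] are the explicitly defined differential expressions in f. -/

import Mathlib

/-!
The quotients `ρ_i = f⁽ⁱ⁾/f` satisfy `ρ_i' = ρ_{i+1} - ρ_1 ρ_i`, and `f' = ρ_1 f`, so the ring
generated by `f` and the `ρ_i` is closed under differentiation. In the derivative of `6 B₄` the
only monomials free of `ρ_1` are `2 ρ_2 ρ_3`, from `2 ρ_1 ρ_3`, and `-2 ρ_2 ρ_3`, from `-ρ_2²`.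
They cancel, and the cofactor of `ρ_1` in what remains is `6 (B₃ - B₄)`.
-/

open Real

/-- `ρ_i = f⁽ⁱ⁾/f`, the ratio of the `i`-th derivative of `f` to `f`. -/
noncomputable def rho (f : ℝ → ℝ) (i : ℕ) (t : ℝ) : ℝ := iteratedDeriv i f t / f t

/-- The component `B₁ = B₂` of the Bach tensor of the cohomogeneity-one metric `g(f)`. -/
noncomputable def B1 (f : ℝ → ℝ) (t : ℝ) : ℝ :=
  (-(rho f 4 t) + rho f 1 t * rho f 3 t + 2 * (rho f 2 t) ^ 2 - (rho f 1 t) ^ 2 * rho f 2 t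
    + 20 * (f t) ^ 2 * rho f 2 t + 20 * (f t) ^ 2 * (rho f 1 t) ^ 2
    - 48 * (f t) ^ 4 + 64 * (f t) ^ 2 - 11) / 6

/-- The component `B₂` of the Bach tensor of the cohomogeneity-one metric `g(f)`. -/
noncomputable def B2 (f : ℝ → ℝ) (t : ℝ) : ℝ :=
  (-(rho f 4 t) + rho f 1 t * rho f 3 t + 2 * (rho f 2 t) ^ 2 - (rho f 1 t) ^ 2 * rho f 2 t
    + 20 * (f t) ^ 2 * rho f 2 t + 20 * (f t) ^ 2 * (rho f 1 t) ^ 2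
    - 48 * (f t) ^ 4 + 64 * (f t) ^ 2 - 11) / 6

/-- The component `B₃` of the Bach tensor of the cohomogeneity-one metric `g(f)`. -/
noncomputable def B3 (f : ℝ → ℝ) (t : ℝ) : ℝ :=
  (2 * rho f 4 t - 4 * rho f 1 t * rho f 3 t - 3 * (rho f 2 t) ^ 2
    + 4 * (rho f 1 t) ^ 2 * rho f 2 t - 40 * (f t) ^ 2 * rho f 2 t
    - 20 * (f t) ^ 2 * (rho f 1 t) ^ 2 + 80 * (f t) ^ 4 - 96 * (f t) ^ 2 + 11) / 6

/-- The component `B₄` of the Bach tensor of the cohomogeneity-one metric `g(f)`. -/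
noncomputable def B4 (f : ℝ → ℝ) (t : ℝ) : ℝ :=
  (2 * rho f 1 t * rho f 3 t - (rho f 2 t) ^ 2 - 2 * (rho f 1 t) ^ 2 * rho f 2 t
    - 20 * (f t) ^ 2 * (rho f 1 t) ^ 2 + 16 * (f t) ^ 4 - 32 * (f t) ^ 2 + 11) / 6

section IteratedDeriv

variable {𝕜 F : Type*} [NontriviallyNormedField 𝕜] [NormedAddCommGroup F] [NormedSpace 𝕜 F]

theorem hasDerivAt_iteratedDeriv_of_contDiffAt {f : 𝕜 → F} {x : 𝕜} {n : WithTop ℕ∞} {i : ℕ}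
    (hf : ContDiffAt 𝕜 n f x) (hi : i < n) :
    HasDerivAt (iteratedDeriv i f) (iteratedDeriv (i + 1) f x) x := by
  have hdiff : DifferentiableAt 𝕜 (iteratedDeriv i f) x := by
    rw [iteratedDeriv_eq_equiv_comp, LinearIsometryEquiv.comp_differentiableAt_iff]
    exact hf.differentiableAt_iteratedFDeriv hi
  rw [iteratedDeriv_succ]
  exact hdiff.hasDerivAt

end IteratedDeriv

section Rho

variable {f : ℝ → ℝ} {t : ℝ}

theorem rho_one (f : ℝ → ℝ) (t : ℝ) : rho f 1 t = deriv f t / f t := by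
  rw [rho, iteratedDeriv_one]

theorem hasDerivAt_rho {n : WithTop ℕ∞} {i : ℕ} (hf : ContDiffAt ℝ n f t) (hi : i < n)
    (ht : f t ≠ 0) :
    HasDerivAt (rho f i) (rho f (i + 1) t - rho f 1 t * rho f i t) t := by
  have hn : n ≠ 0 := (zero_le.trans_lt hi).ne'
  have hquot := (hasDerivAt_iteratedDeriv_of_contDiffAt hf hi).fun_div
    (hf.differentiableAt hn).hasDerivAt ht
  refine hquot.congr_deriv ?_
  rw [rho_one, rho, rho]
  field_simp

theorem hasDerivAt_pow_rho_one (hf : DifferentiableAt ℝ f t) (ht : f t ≠ 0) (k : ℕ) :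
    HasDerivAt (fun s ↦ f s ^ k) (k * rho f 1 t * f t ^ k) t := by
  refine (hf.hasDerivAt.fun_pow k).congr_deriv ?_
  rw [rho_one]
  cases k with
  | zero => simp
  | succ k =>
    rw [Nat.add_sub_cancel]
    field_simp
    ring

theorem hasDerivAt_rho_mul_rho {n : WithTop ℕ∞} {i j : ℕ} (hf : ContDiffAt ℝ n f t)
    (hi : i < n) (hj : j < n) (ht : f t ≠ 0) :
    HasDerivAt (fun s ↦ rho f i s * rho f j s)
      (rho f (i + 1) t * rho f j t + rho f i t * rho f (j + 1) t
        - 2 * rho f 1 t * (rho f i t * rho f j t)) t :=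
  ((hasDerivAt_rho hf hi ht).fun_mul (hasDerivAt_rho hf hj ht)).congr_deriv (by ring)

theorem hasDerivAt_rho_one_sq_mul_rho {n : WithTop ℕ∞} {i : ℕ} (hf : ContDiffAt ℝ n f t)
    (h1 : 1 < n) (hi : i < n) (ht : f t ≠ 0) :
    HasDerivAt (fun s ↦ rho f 1 s ^ 2 * rho f i s)
      (rho f 1 t * (2 * rho f 2 t * rho f i t + rho f 1 t * rho f (i + 1) t
        - 3 * rho f 1 t ^ 2 * rho f i t)) t := by
  have hρ₁ := hasDerivAt_rho (i := 1) hf (mod_cast h1) ht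
  exact ((hρ₁.fun_pow 2).fun_mul (hasDerivAt_rho hf hi ht)).congr_deriv (by ring)

theorem hasDerivAt_sq_mul_rho_one_sq (hf : ContDiffAt ℝ 2 f t) (ht : f t ≠ 0) :
    HasDerivAt (fun s ↦ f s ^ 2 * rho f 1 s ^ 2) (2 * f t ^ 2 * rho f 1 t * rho f 2 t) t := by
  have hpow := hasDerivAt_pow_rho_one (hf.differentiableAt two_ne_zero) ht 2
  have hρ₁ := hasDerivAt_rho (i := 1) hf (by norm_num) ht
  exact (hpow.fun_mul (hρ₁.fun_pow 2)).congr_deriv (by ring)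

end Rho

theorem bach_divergence_free_general {f : ℝ → ℝ} {t : ℝ} (hf : ContDiffAt ℝ 4 f t)
    (ht : f t ≠ 0) :
    HasDerivAt (B4 f) (deriv f t / f t * (B3 f t - B4 f t)) t := by
  have hpow := hasDerivAt_pow_rho_one (hf.differentiableAt four_ne_zero) ht
  have h13 := hasDerivAt_rho_mul_rho (i := 1) (j := 3) hf (by norm_num) (by norm_num) ht
  have h22 := hasDerivAt_rho_mul_rho (i := 2) (j := 2) hf (by norm_num) (by norm_num) ht
  have h112 := hasDerivAt_rho_one_sq_mul_rho (i := 2) hf (by norm_num) (by norm_num) ht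
  have hf11 := hasDerivAt_sq_mul_rho_one_sq (hf.of_le (by norm_num)) ht
  have hB4 : B4 f = fun s ↦ (2 * (rho f 1 s * rho f 3 s) - rho f 2 s * rho f 2 s
      - 2 * (rho f 1 s ^ 2 * rho f 2 s) - 20 * (f s ^ 2 * rho f 1 s ^ 2)
      + 16 * f s ^ 4 - 32 * f s ^ 2 + 11) / 6 := by
    funext s
    rw [B4]
    ring
  have hderiv := (((((((h13.const_mul 2).fun_sub h22).fun_sub (h112.const_mul 2)).fun_sub
    (hf11.const_mul 20)).fun_add ((hpow 4).const_mul 16)).fun_sub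
    ((hpow 2).const_mul 32)).add_const 11).div_const 6
  rw [← hB4] at hderiv
  refine hderiv.congr_deriv ?_
  rw [← rho_one, B3, B4]
  push_cast
  ring

/-- The divergence-free identity `(B₄)'\'' = (f'\''/f)(B₃ - B₄)`. -/
theorem bach_divergence_free (a b : ℝ) (f : ℝ → ℝ)
    (hf : ContDiff ℝ (⊤ : ℕ∞) f) (hpos : ∀ t ∈ Set.Ioo a b, 0 < f t) :
    ∀ t ∈ Set.Ioo a b,
      deriv (B4 f) t = (deriv f t / f t) * (B3 f t - B4 f t) := by
  intro t ht
  have hf4 : ContDiffAt ℝ 4 f t := (contDiff_infty.1 hf 4).contDiffAt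
  exact (bach_divergence_free_general hf4 (hpos t ht).ne').deriv
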